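/- Suppose q ∈ [2,∞), p ∈ (1,q], η ∈ (0,1), and (X,‖·‖_X) is a Banach space satisfying δ_X(ε) ≥ (ηε)^q for every ε ∈ (0,1). Then there exists a constant C = C(η,p,q) ∈ (0,∞) such that every smooth compactly supported f : ℍ(ℝ) → X satisfies (∫₀^∞ (∫_{ℍ(ℝ)} ‖f(hc^t) − f(h)‖_X^p dμ(h))^{q/p} dt/t^{1+q/2})^{1/q} ≤ C (∫_{ℍ(ℝ)} ‖∇_ℍ f(h)‖_{ℓ_p²(X)}^p dμ(h))^{1/p}. -/

import Mathlib

open MeasureTheory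

/-- The real Heisenberg group `ℍ(ℝ)`, identified with `ℝ³`; the Lebesgue measure
(`volume`) is a Haar measure for the Heisenberg group structure. -/
abbrev HR : Type := ℝ × ℝ × ℝ

namespace HR

/-- Right translation by the central element `c^t`: `h ↦ h·c^t`. -/
def vmul (t : ℝ) (h : HR) : HR := (h.1, h.2.1, h.2.2 + t)

/-- The Poisson kernel `P_t(u) = t/(π(t²+u²))` on `ℝ`. -/
noncomputable def Pker (t u : ℝ) : ℝ := t / (Real.pi * (t ^ 2 + u ^ 2))

/-- `Q_t(u) = ∂P_t/∂t(u) = (u²−t²)/(π(t²+u²)²)`. -/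
noncomputable def Qker (t u : ℝ) : ℝ := (u ^ 2 - t ^ 2) / (Real.pi * (t ^ 2 + u ^ 2) ^ 2)

variable {X : Type*} [NormedAddCommGroup X] [NormedSpace ℝ X]

/-- Convolution of a kernel `ψ : ℝ → ℝ` with `g : ℍ(ℝ) → X` along the center:
`(ψ*g)(x,y,z) = ∫_ℝ ψ(u) g(x,y,z−u) du`. -/
noncomputable def conv (ψ : ℝ → ℝ) (g : HR → X) (h : HR) : X :=
  ∫ u : ℝ, ψ u • g (h.1, h.2.1, h.2.2 - u)

/-- The left-invariant horizontal derivative `∂_a f = ∂f/∂x`. -/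
noncomputable def da (f : HR → X) (h : HR) : X := fderiv ℝ f h (1, 0, 0)

/-- The left-invariant horizontal derivative `∂_b f = ∂f/∂y + x·∂f/∂z`. -/
noncomputable def db (f : HR → X) (h : HR) : X :=
  fderiv ℝ f h (0, 1, 0) + h.1 • fderiv ℝ f h (0, 0, 1)

end HR

/-!
Central translation by `c^t` commutes with `∇_ℍ`. For fixed `t`, let `M_k` be the mean of the
translations by `c^{jt}`, `0 ≤ j < 2ᵏ`. Uniform convexity passes from `X` to `L_p(ℍ; ℓ_p²(X))`, and
applied to the two halves of `M_{k+1}` it yields a martingale-like inequality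
`κ ∑ ‖(M_k - M_{k+1}) ∇_ℍ f‖^q ≤ ‖∇_ℍ f‖^q` with `κ > 0`. Since `c^{s²}` is a commutator of
horizontal elements of length `s`, translating by `c^{2ᵏt}` moves a function by at most `4 √(2ᵏt)`
times the norm of its gradient. Applied to `(M_k - M_{k+1}) f`, this bounds
`‖(M_k - M_{k+1}) f‖ / √(2ᵏt)` by the gradient increments up to a term that contracts geometrically
in `k`. Summing over `k` controls `∑ (‖f(· c^{2ᵏt}) - f‖ / √(2ᵏt))^q` uniformly in `t`, and an
average over `a ≤ t ≤ 2a` against `dt/t` turns the sum into the integral over `t ≥ a`.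
-/

theorem rpow_mul_add_le {θ x y q : ℝ} (hθ : 0 ≤ θ) (hθ' : θ < 1) (hx : 0 ≤ x) (hy : 0 ≤ y)
    (hq : 1 ≤ q) : (θ * x + y) ^ q ≤ θ * x ^ q + (1 - θ) ^ (1 - q) * y ^ q := by
  have hθ₁ : 0 < 1 - θ := by linarith
  have hconv := (convexOn_rpow hq).2 hx
    (show y / (1 - θ) ∈ Set.Ici 0 from div_nonneg hy hθ₁.le) hθ hθ₁.le (by ring)
  simp only [smul_eq_mul] at hconv
  rw [Real.rpow_sub hθ₁, Real.rpow_one]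
  rwa [mul_div_cancel₀ _ hθ₁.ne', Real.div_rpow hy hθ₁.le, mul_div_left_comm,
    mul_comm (y ^ q)] at hconv

theorem rpow_add_le {x y q : ℝ} (hx : 0 ≤ x) (hy : 0 ≤ y) (hq : 1 ≤ q) :
    (x + y) ^ q ≤ 2 ^ (q - 1) * (x ^ q + y ^ q) := by
  exact_mod_cast NNReal.rpow_add_le_mul_rpow_add_rpow ⟨x, hx⟩ ⟨y, hy⟩ hq

section Recursion

variable {a b : ℕ → ℝ} {θ q : ℝ}

theorem sum_rpow_le_of_le_mul_add {a' : ℕ → ℝ} (hθ : 0 ≤ θ) (hθ' : θ < 1) (hq : 1 ≤ q)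
    (ha : ∀ k, 0 ≤ a k) (hb : ∀ k, 0 ≤ b k) (ha' : ∀ k, 0 ≤ a' k)
    (h : ∀ k, a' k ≤ θ * a k + b k) (n : ℕ) :
    ∑ k ∈ Finset.range n, a' k ^ q ≤ θ * ∑ k ∈ Finset.range n, a k ^ q +
      (1 - θ) ^ (1 - q) * ∑ k ∈ Finset.range n, b k ^ q := by
  rw [Finset.mul_sum, Finset.mul_sum, ← Finset.sum_add_distrib]
  exact Finset.sum_le_sum fun k _ ↦ (Real.rpow_le_rpow (ha' k) (h k) (by linarith)).trans
    (rpow_mul_add_le hθ hθ' (ha k) (hb k) hq)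

theorem le_rpow_neg_mul_of_one_sub_mul_le {x y : ℝ} (hθ' : θ < 1)
    (h : (1 - θ) * x ≤ (1 - θ) ^ (1 - q) * y) : x ≤ (1 - θ) ^ (-q) * y := by
  have hθ₁ : 0 < 1 - θ := by linarith
  rw [sub_eq_add_neg 1 q, Real.rpow_add hθ₁, Real.rpow_one, mul_assoc] at h
  exact le_of_mul_le_mul_left h hθ₁

theorem sum_rpow_le_of_le_succ (hθ : 0 ≤ θ) (hθ' : θ < 1) (hq : 1 ≤ q)
    (ha : ∀ k, 0 ≤ a k) (hb : ∀ k, 0 ≤ b k) (h : ∀ k, a k ≤ θ * a (k + 1) + b k) (n : ℕ) :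
    ∑ k ∈ Finset.range n, a k ^ q ≤
      (1 - θ) ^ (-q) * (a n ^ q + ∑ k ∈ Finset.range n, b k ^ q) := by
  have hsum := sum_rpow_le_of_le_mul_add hθ hθ' hq (fun k ↦ ha (k + 1)) hb ha h n
  have hshift := Finset.sum_range_succ (fun k ↦ a k ^ q) n
  rw [Finset.sum_range_succ'] at hshift
  have hΓ : 1 ≤ (1 - θ) ^ (1 - q) :=
    Real.one_le_rpow_of_pos_of_le_one_of_nonpos (by linarith) (by linarith) (by linarith)
  apply le_rpow_neg_mul_of_one_sub_mul_le hθ'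
  nlinarith [Real.rpow_nonneg (ha 0) q, Real.rpow_nonneg (ha n) q]

theorem sum_rpow_le_of_succ_le (hθ : 0 ≤ θ) (hθ' : θ < 1) (hq : 1 ≤ q)
    (ha : ∀ k, 0 ≤ a k) (hb : ∀ k, 0 ≤ b k) (ha₀ : a 0 = 0)
    (h : ∀ k, a (k + 1) ≤ θ * a k + b k) (n : ℕ) :
    ∑ k ∈ Finset.range n, a k ^ q ≤ (1 - θ) ^ (-q) * ∑ k ∈ Finset.range n, b k ^ q := by
  have hsum := sum_rpow_le_of_le_mul_add hθ hθ' hq ha hb (fun k ↦ ha (k + 1)) h n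
  have hshift := Finset.sum_range_succ (fun k ↦ a k ^ q) n
  rw [Finset.sum_range_succ', ha₀, Real.zero_rpow (by linarith)] at hshift
  apply le_rpow_neg_mul_of_one_sub_mul_le hθ'
  nlinarith [Real.rpow_nonneg (ha n) q]

end Recursion

/-- Two-point `q`-uniform convexity with constant `c`, where the norms of the two endpoints are
averaged in `ℓ_p`. Unlike the modulus of convexity, this inequality passes to `L_p`. -/
def TwoPointConvex (E : Type*) [NormedAddCommGroup E] (c p q : ℝ) : Prop :=
  ∀ u v : E, (‖u + v‖ / 2) ^ q + c * (‖u - v‖ / 2) ^ q ≤ ((‖u‖ ^ p + ‖v‖ ^ p) / 2) ^ (q / p)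

theorem norm_half_smul {E : Type*} [NormedAddCommGroup E] [NormedSpace ℝ E] (x : E) :
    ‖(1 / 2 : ℝ) • x‖ = ‖x‖ / 2 := by
  rw [norm_smul, Real.norm_of_nonneg (by norm_num), one_div_mul_eq_div]

theorem TwoPointConvex.of_norm_eq {E : Type*} [NormedAddCommGroup E] {c p q : ℝ}
    (hE : TwoPointConvex E c p q) (hp : p ≠ 0) {u v : E} (huv : ‖u‖ = ‖v‖) :
    (‖u + v‖ / 2) ^ q + c * (‖u - v‖ / 2) ^ q ≤ ‖u‖ ^ q := by
  have := hE u v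
  rwa [← huv, add_self_div_two, ← Real.rpow_mul (norm_nonneg u), mul_div_cancel₀ _ hp] at this

section Dyadic

variable {V : Type*} [AddCommGroup V] [Module ℝ V]

/-- The dyadic Cesàro mean `M_k = 2⁻ᵏ ∑_{j < 2ᵏ} τʲ` of the iterates of `τ`, in the factored form
`M_{k+1} = (1 + τ^{2ᵏ}) M_k / 2`. -/
noncomputable def dyadicMean (τ : Module.End ℝ V) : ℕ → Module.End ℝ V
  | 0 => 1
  | k + 1 => (1 / 2 : ℝ) • ((1 + τ ^ 2 ^ k) * dyadicMean τ k)

/-- The martingale-like difference `D_k = M_k - M_{k+1}` of consecutive dyadic means, in the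
factored form `D_k = (1 - τ^{2ᵏ}) M_k / 2`. -/
noncomputable def dyadicDiff (τ : Module.End ℝ V) (k : ℕ) : Module.End ℝ V :=
  (1 / 2 : ℝ) • ((1 - τ ^ 2 ^ k) * dyadicMean τ k)

theorem dyadicMean_zero_apply (τ : Module.End ℝ V) (x : V) : dyadicMean τ 0 x = x := rfl

theorem dyadicMean_succ_apply (τ : Module.End ℝ V) (k : ℕ) (x : V) :
    dyadicMean τ (k + 1) x =
      (1 / 2 : ℝ) • (dyadicMean τ k x + (τ ^ 2 ^ k) (dyadicMean τ k x)) := rfl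

theorem dyadicDiff_apply (τ : Module.End ℝ V) (k : ℕ) (x : V) :
    dyadicDiff τ k x = (1 / 2 : ℝ) • (dyadicMean τ k x - (τ ^ 2 ^ k) (dyadicMean τ k x)) := rfl

theorem sub_dyadicMean_succ (τ : Module.End ℝ V) (k : ℕ) (x : V) :
    x - dyadicMean τ (k + 1) x = x - dyadicMean τ k x + dyadicDiff τ k x := by
  rw [dyadicMean_succ_apply, dyadicDiff_apply]
  module

theorem sub_pow_two_pow_apply (τ : Module.End ℝ V) (k : ℕ) (x : V) :
    x - (τ ^ 2 ^ k) x = (2 : ℝ) • dyadicDiff τ k x +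
      (x - dyadicMean τ k x - (τ ^ 2 ^ k) (x - dyadicMean τ k x)) := by
  rw [dyadicDiff_apply, map_sub]
  module

/-- This is `D_{k+1} = (1 + T)² D_k / 2` with `T = τ ^ 2ᵏ`, solved for `D_k` so that only
multiples of `(1 - T) D_k` remain as error terms. -/
theorem dyadicDiff_eq_half_smul_succ_add (τ : Module.End ℝ V) (k : ℕ) (x : V) :
    dyadicDiff τ k x = (1 / 2 : ℝ) • dyadicDiff τ (k + 1) x +
      ((3 / 4 : ℝ) • (dyadicDiff τ k x - (τ ^ 2 ^ k) (dyadicDiff τ k x)) +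
      (1 / 4 : ℝ) • (τ ^ 2 ^ k) (dyadicDiff τ k x - (τ ^ 2 ^ k) (dyadicDiff τ k x))) := by
  have hpow : ∀ y, (τ ^ 2 ^ (k + 1)) y = (τ ^ 2 ^ k) ((τ ^ 2 ^ k) y) := fun y ↦ by
    rw [pow_succ 2 k, pow_mul, pow_two, Module.End.mul_apply]
  simp only [dyadicDiff_apply, dyadicMean_succ_apply, hpow, map_smul, map_sub, map_add]
  module

variable {W : Type*} [AddCommGroup W] [Module ℝ W] {τ : Module.End ℝ V} {σ : Module.End ℝ W}
  {A : V →ₗ[ℝ] W}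

theorem map_pow_apply (hA : A ∘ₗ τ = σ ∘ₗ A) (n : ℕ) (x : V) : A ((τ ^ n) x) = (σ ^ n) (A x) :=
  (LinearMap.congr_fun (Module.End.commute_pow_left_of_commute hA.symm n) x).symm

theorem map_dyadicMean (hA : A ∘ₗ τ = σ ∘ₗ A) (k : ℕ) (x : V) :
    A (dyadicMean τ k x) = dyadicMean σ k (A x) := by
  induction k with
  | zero => rfl
  | succ k ih =>
    rw [dyadicMean_succ_apply, dyadicMean_succ_apply, map_smul, map_add, map_pow_apply hA, ih]

theorem map_dyadicDiff (hA : A ∘ₗ τ = σ ∘ₗ A) (k : ℕ) (x : V) :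
    A (dyadicDiff τ k x) = dyadicDiff σ k (A x) := by
  rw [dyadicDiff_apply, dyadicDiff_apply, map_smul, map_sub, map_pow_apply hA, map_dyadicMean hA]

end Dyadic

section DyadicNorm

variable {W : Type*} [NormedAddCommGroup W] [NormedSpace ℝ W] (σ : W →ₗᵢ[ℝ] W)

theorem norm_isometry_pow_apply (n : ℕ) (x : W) : ‖(σ.toLinearMap ^ n) x‖ = ‖x‖ := by
  induction n with
  | zero => rfl
  | succ n ih => rw [pow_succ', Module.End.mul_apply, LinearIsometry.coe_toLinearMap,
      σ.norm_map, ih]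

theorem norm_dyadicMean_le (k : ℕ) (x : W) : ‖dyadicMean σ.toLinearMap k x‖ ≤ ‖x‖ := by
  induction k with
  | zero => rfl
  | succ k ih =>
    rw [dyadicMean_succ_apply, norm_half_smul]
    have := norm_add_le (dyadicMean σ.toLinearMap k x)
      ((σ.toLinearMap ^ 2 ^ k) (dyadicMean σ.toLinearMap k x))
    rw [norm_isometry_pow_apply] at this
    linarith

theorem TwoPointConvex.sum_dyadicDiff_le {c p q : ℝ} (hW : TwoPointConvex W c p q) (hp : p ≠ 0)
    (x : W) (n : ℕ) :
    c * ∑ k ∈ Finset.range n, ‖dyadicDiff σ.toLinearMap k x‖ ^ q ≤ ‖x‖ ^ q := by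
  have htelescope : ‖dyadicMean σ.toLinearMap n x‖ ^ q +
      c * ∑ k ∈ Finset.range n, ‖dyadicDiff σ.toLinearMap k x‖ ^ q ≤ ‖x‖ ^ q := by
    induction n with
    | zero => simp [dyadicMean_zero_apply]
    | succ n ih =>
      have := hW.of_norm_eq hp
        (norm_isometry_pow_apply σ (2 ^ n) (dyadicMean σ.toLinearMap n x)).symm
      rw [← norm_half_smul, ← norm_half_smul, ← dyadicMean_succ_apply, ← dyadicDiff_apply] at this
      rw [Finset.sum_range_succ, mul_add]
      linarith
  exact (le_add_of_nonneg_left (by positivity)).trans htelescope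

end DyadicNorm

/-- The constant of the abstract dyadic Poincaré inequality; `1 - (√2)⁻¹` is the gap in the
contraction `a_k ≤ (√2)⁻¹ a_{k+1} + b_k` driving the proof. -/
noncomputable def dyadicPoincareConst (q c : ℝ) : ℝ :=
  4 ^ q * ((1 - (√2)⁻¹) ^ (-q) * (1 + (1 - (√2)⁻¹) ^ (-q))) * (1 + c⁻¹)

theorem inv_sqrt_two_lt_one : (√2)⁻¹ < 1 :=
  inv_lt_one_of_one_lt₀ (Real.lt_sqrt_of_sq_lt (by norm_num))

theorem dyadicPoincareConst_pos (q : ℝ) {c : ℝ} (hc : 0 < c) : 0 < dyadicPoincareConst q c := by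
  have : 0 < 1 - (√2)⁻¹ := sub_pos.2 inv_sqrt_two_lt_one
  unfold dyadicPoincareConst
  positivity

/-- The hypotheses of the abstract dyadic Poincaré inequality. The vertical translation `τ` and its
counterpart `σ` are intertwined by the horizontal gradient `A`, and the increments along `τ ^ 2ᵏ`
obey a Poincaré inequality at the scale `ω k`, which grows like `√2 ^ k`. -/
structure IsVerticalSystem {V W : Type*} [AddCommGroup V] [Module ℝ V] [NormedAddCommGroup W]
    [NormedSpace ℝ W] (N : Seminorm ℝ V) (τ : Module.End ℝ V) (σ : W →ₗᵢ[ℝ] W) (A : V →ₗ[ℝ] W)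
    (ω : ℕ → ℝ) : Prop where
  map_eq : ∀ x, N (τ x) = N x
  intertwines : A ∘ₗ τ = σ.toLinearMap ∘ₗ A
  scale_pos : ∀ k, 0 < ω k
  scale_succ : ∀ k, ω (k + 1) = √2 * ω k
  poincare : ∀ k x, N (x - (τ ^ 2 ^ k) x) ≤ ω k * ‖A x‖

namespace IsVerticalSystem

variable {V W : Type*} [AddCommGroup V] [Module ℝ V] [NormedAddCommGroup W] [NormedSpace ℝ W]
  {N : Seminorm ℝ V} {τ : Module.End ℝ V} {σ : W →ₗᵢ[ℝ] W} {A : V →ₗ[ℝ] W} {ω : ℕ → ℝ}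

theorem map_pow_eq (h : IsVerticalSystem N τ σ A ω) (n : ℕ) (x : V) : N ((τ ^ n) x) = N x := by
  induction n with
  | zero => rfl
  | succ n ih => rw [pow_succ', Module.End.mul_apply, h.map_eq, ih]

theorem div_scale_nonneg (h : IsVerticalSystem N τ σ A ω) (k : ℕ) (x : V) : 0 ≤ N x / ω k :=
  div_nonneg (apply_nonneg N x) (h.scale_pos k).le

theorem dyadicDiff_div_scale_le (h : IsVerticalSystem N τ σ A ω) (k : ℕ) (x : V) :
    N (dyadicDiff τ k x) / ω k ≤ ‖A x‖ := by
  rw [div_le_iff₀' (h.scale_pos k), dyadicDiff_apply, map_smul_eq_mul,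
    Real.norm_of_nonneg (by norm_num)]
  calc 1 / 2 * N (dyadicMean τ k x - (τ ^ 2 ^ k) (dyadicMean τ k x))
      ≤ N (dyadicMean τ k x - (τ ^ 2 ^ k) (dyadicMean τ k x)) := by
        linarith [apply_nonneg N (dyadicMean τ k x - (τ ^ 2 ^ k) (dyadicMean τ k x))]
    _ ≤ ω k * ‖A (dyadicMean τ k x)‖ := h.poincare k _
    _ ≤ ω k * ‖A x‖ := by
        rw [map_dyadicMean h.intertwines]
        exact mul_le_mul_of_nonneg_left (norm_dyadicMean_le σ k _) (h.scale_pos k).le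

theorem dyadicDiff_div_scale_le_succ (h : IsVerticalSystem N τ σ A ω) (k : ℕ) (x : V) :
    N (dyadicDiff τ k x) / ω k ≤
      (√2)⁻¹ * (N (dyadicDiff τ (k + 1) x) / ω (k + 1)) + ‖dyadicDiff σ.toLinearMap k (A x)‖ := by
  set d := dyadicDiff τ k x - (τ ^ 2 ^ k) (dyadicDiff τ k x)
  have hd : N d ≤ ω k * ‖dyadicDiff σ.toLinearMap k (A x)‖ :=
    map_dyadicDiff h.intertwines k x ▸ h.poincare k _
  have hN : N (dyadicDiff τ k x) ≤ 1 / 2 * N (dyadicDiff τ (k + 1) x) + N d :=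
    calc N (dyadicDiff τ k x)
        = N ((1 / 2 : ℝ) • dyadicDiff τ (k + 1) x +
            ((3 / 4 : ℝ) • d + (1 / 4 : ℝ) • (τ ^ 2 ^ k) d)) :=
          congrArg N (dyadicDiff_eq_half_smul_succ_add τ k x)
      _ ≤ N ((1 / 2 : ℝ) • dyadicDiff τ (k + 1) x) +
            (N ((3 / 4 : ℝ) • d) + N ((1 / 4 : ℝ) • (τ ^ 2 ^ k) d)) :=
          (map_add_le_add N _ _).trans (add_le_add_right (map_add_le_add N _ _) _)
      _ = 1 / 2 * N (dyadicDiff τ (k + 1) x) + N d := by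
          simp only [map_smul_eq_mul, h.map_pow_eq]
          norm_num
          ring
  have hscale : (√2)⁻¹ * (N (dyadicDiff τ (k + 1) x) / ω (k + 1)) * ω k =
      1 / 2 * N (dyadicDiff τ (k + 1) x) := by
    rw [h.scale_succ]
    field_simp [(h.scale_pos k).ne']
    rw [Real.sq_sqrt zero_le_two, mul_comm]
  rw [div_le_iff₀ (h.scale_pos k), add_mul, hscale]
  linarith

theorem sub_dyadicMean_div_scale_succ_le (h : IsVerticalSystem N τ σ A ω) (k : ℕ) (x : V) :
    N (x - dyadicMean τ (k + 1) x) / ω (k + 1) ≤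
      (√2)⁻¹ * (N (x - dyadicMean τ k x) / ω k) + N (dyadicDiff τ k x) / ω k := by
  have hω := h.scale_pos k
  have hsqrt : (1 : ℝ) ≤ √2 := Real.one_le_sqrt.2 (by norm_num)
  calc N (x - dyadicMean τ (k + 1) x) / ω (k + 1)
      ≤ (N (x - dyadicMean τ k x) + N (dyadicDiff τ k x)) / (√2 * ω k) := by
        rw [h.scale_succ, sub_dyadicMean_succ]
        gcongr
        exact map_add_le_add N _ _
    _ = (√2)⁻¹ * (N (x - dyadicMean τ k x) / ω k) + (√2)⁻¹ * (N (dyadicDiff τ k x) / ω k) := by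
        field_simp
    _ ≤ _ := by
        gcongr
        exact mul_le_of_le_one_left (by positivity) (inv_le_one_of_one_le₀ hsqrt)

theorem sub_pow_div_scale_le (h : IsVerticalSystem N τ σ A ω) (k : ℕ) (x : V) :
    N (x - (τ ^ 2 ^ k) x) / ω k ≤
      2 * (N (dyadicDiff τ k x) / ω k + N (x - dyadicMean τ k x) / ω k) := by
  rw [← add_div, mul_div_assoc']
  refine div_le_div_of_nonneg_right ?_ (h.scale_pos k).le
  set e := x - dyadicMean τ k x
  calc N (x - (τ ^ 2 ^ k) x) = N ((2 : ℝ) • dyadicDiff τ k x + (e - (τ ^ 2 ^ k) e)) :=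
        congrArg N (sub_pow_two_pow_apply τ k x)
    _ ≤ N ((2 : ℝ) • dyadicDiff τ k x) + (N e + N ((τ ^ 2 ^ k) e)) :=
        (map_add_le_add N _ _).trans (add_le_add_right (map_sub_le_add N _ _) _)
    _ = 2 * (N (dyadicDiff τ k x) + N e) := by
        rw [map_smul_eq_mul, h.map_pow_eq, Real.norm_of_nonneg (by norm_num)]
        ring

theorem sub_pow_div_scale_rpow_le {q : ℝ} (h : IsVerticalSystem N τ σ A ω) (hq : 1 ≤ q) (k : ℕ)
    (x : V) :
    (N (x - (τ ^ 2 ^ k) x) / ω k) ^ q ≤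
      4 ^ q * ((N (dyadicDiff τ k x) / ω k) ^ q + (N (x - dyadicMean τ k x) / ω k) ^ q) := by
  set a := N (dyadicDiff τ k x) / ω k
  set e := N (x - dyadicMean τ k x) / ω k
  have ha : 0 ≤ a := h.div_scale_nonneg k _
  have he : 0 ≤ e := h.div_scale_nonneg k _
  calc (N (x - (τ ^ 2 ^ k) x) / ω k) ^ q ≤ (2 * (a + e)) ^ q :=
        Real.rpow_le_rpow (h.div_scale_nonneg k _) (h.sub_pow_div_scale_le k x) (by linarith)
    _ = 2 ^ q * (a + e) ^ q := Real.mul_rpow zero_le_two (add_nonneg ha he)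
    _ ≤ 2 ^ q * (2 ^ q * (a ^ q + e ^ q)) := by
        gcongr
        refine (rpow_add_le ha he hq).trans ?_
        gcongr <;> linarith
    _ = 4 ^ q * (a ^ q + e ^ q) := by
        rw [← mul_assoc, ← Real.mul_rpow zero_le_two zero_le_two]
        norm_num

theorem sum_dyadicDiff_div_scale_le {c p q : ℝ} (h : IsVerticalSystem N τ σ A ω)
    (hW : TwoPointConvex W c p q) (hc : 0 < c) (hp : p ≠ 0) (hq : 1 ≤ q) (x : V) (n : ℕ) :
    ∑ k ∈ Finset.range n, (N (dyadicDiff τ k x) / ω k) ^ q ≤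
      (1 - (√2)⁻¹) ^ (-q) * ((1 + c⁻¹) * ‖A x‖ ^ q) := by
  have hgap : 0 ≤ 1 - (√2)⁻¹ := sub_nonneg.2 inv_sqrt_two_lt_one.le
  refine (sum_rpow_le_of_le_succ (by positivity) inv_sqrt_two_lt_one hq
    (fun k ↦ h.div_scale_nonneg k _) (fun k ↦ norm_nonneg _)
    (fun k ↦ h.dyadicDiff_div_scale_le_succ k x) n).trans ?_
  rw [one_add_mul]
  gcongr
  · exact h.div_scale_nonneg n _
  · exact h.dyadicDiff_div_scale_le n x
  · exact (le_inv_mul_iff₀ hc).2 (hW.sum_dyadicDiff_le σ hp (A x) n)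

theorem sum_sub_pow_div_scale_le {c p q : ℝ} (h : IsVerticalSystem N τ σ A ω)
    (hW : TwoPointConvex W c p q) (hc : 0 < c) (hp : p ≠ 0) (hq : 1 ≤ q) (x : V) (n : ℕ) :
    ∑ k ∈ Finset.range n, (N (x - (τ ^ 2 ^ k) x) / ω k) ^ q ≤
      dyadicPoincareConst q c * ‖A x‖ ^ q := by
  have hgap : 0 ≤ 1 - (√2)⁻¹ := sub_nonneg.2 inv_sqrt_two_lt_one.le
  set Γ := (1 - (√2)⁻¹) ^ (-q) with hΓ_def
  set a : ℕ → ℝ := fun k ↦ N (dyadicDiff τ k x) / ω k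
  set e : ℕ → ℝ := fun k ↦ N (x - dyadicMean τ k x) / ω k
  have ha : ∀ k, 0 ≤ a k := fun k ↦ h.div_scale_nonneg k _
  have he : ∀ k, 0 ≤ e k := fun k ↦ h.div_scale_nonneg k _
  have hsum_a : ∑ k ∈ Finset.range n, a k ^ q ≤ Γ * ((1 + c⁻¹) * ‖A x‖ ^ q) :=
    h.sum_dyadicDiff_div_scale_le hW hc hp hq x n
  have hsum_e : ∑ k ∈ Finset.range n, e k ^ q ≤ Γ * ∑ k ∈ Finset.range n, a k ^ q :=
    sum_rpow_le_of_succ_le (by positivity) inv_sqrt_two_lt_one hq he ha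
      (by simp [e, dyadicMean_zero_apply])
      (fun k ↦ h.sub_dyadicMean_div_scale_succ_le k x) n
  calc ∑ k ∈ Finset.range n, (N (x - (τ ^ 2 ^ k) x) / ω k) ^ q
      ≤ 4 ^ q * (∑ k ∈ Finset.range n, a k ^ q + ∑ k ∈ Finset.range n, e k ^ q) := by
        rw [← Finset.sum_add_distrib, Finset.mul_sum]
        exact Finset.sum_le_sum fun k _ ↦ h.sub_pow_div_scale_rpow_le hq k x
    _ ≤ 4 ^ q * (Γ * ((1 + c⁻¹) * ‖A x‖ ^ q) + Γ * (Γ * ((1 + c⁻¹) * ‖A x‖ ^ q))) := by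
        gcongr
        exact hsum_e.trans (by gcongr)
    _ = dyadicPoincareConst q c * ‖A x‖ ^ q := by
        rw [dyadicPoincareConst, ← hΓ_def]
        ring

end IsVerticalSystem

theorem mul_le_one_add_rpow_sub_one_sub_rpow {s x : ℝ} (hs : 0 ≤ s) (hx₀ : 0 ≤ x) (hx₁ : x ≤ 1) :
    s * x ≤ (1 + x) ^ s - (1 - x) ^ s := by
  rcases le_total s 1 with h | h
  · have hminus := rpow_one_add_le_one_add_mul_self (s := -x) (by linarith) hs h
    have hplus := Real.one_le_rpow (by linarith : 1 ≤ 1 + x) hs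
    rw [← sub_eq_add_neg] at hminus
    linarith
  · have hplus := one_add_mul_self_le_rpow_one_add (s := x) (by linarith) h
    have hminus := Real.rpow_le_one (by linarith : 0 ≤ 1 - x) (by linarith) hs
    linarith

theorem one_add_mul_sq_le_rpow_mean {p x : ℝ} (hp : 1 ≤ p) (hx₀ : 0 ≤ x) (hx₁ : x ≤ 1) :
    1 + p * (p - 1) / 4 * x ^ 2 ≤ ((1 + x) ^ p + (1 - x) ^ p) / 2 := by
  set φ : ℝ → ℝ := fun x ↦ ((1 + x) ^ p + (1 - x) ^ p) / 2 - p * (p - 1) / 4 * x ^ 2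
  have hφ : ∀ x, HasDerivAt φ
      (p / 2 * ((1 + x) ^ (p - 1) - (1 - x) ^ (p - 1) - (p - 1) * x)) x := by
    intro x
    have hplus := ((hasDerivAt_id x).const_add 1).rpow_const (p := p) (Or.inr hp)
    have hminus := ((hasDerivAt_id x).const_sub 1).rpow_const (p := p) (Or.inr hp)
    refine (((hplus.add hminus).div_const 2).sub
      ((hasDerivAt_pow 2 x).const_mul (p * (p - 1) / 4))).congr_deriv ?_
    simp only [id_eq]
    ring
  have hmono : MonotoneOn φ (Set.Icc 0 1) := by
    refine monotoneOn_of_deriv_nonneg (convex_Icc 0 1)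
      (fun x _ ↦ (hφ x).continuousAt.continuousWithinAt)
      (fun x _ ↦ (hφ x).differentiableAt.differentiableWithinAt) fun x hx ↦ ?_
    rw [interior_Icc] at hx
    rw [(hφ x).deriv]
    have := mul_le_one_add_rpow_sub_one_sub_rpow (sub_nonneg.2 hp) hx.1.le hx.2.le
    exact mul_nonneg (by linarith) (by linarith)
  have h := hmono (Set.left_mem_Icc.2 zero_le_one) ⟨hx₀, hx₁⟩ hx₀
  norm_num [φ] at h
  linarith

theorem rpow_add_mul_rpow_le_rpow_mean {p q m d : ℝ} (hp : 1 ≤ p) (hpq : p ≤ q) (hq : 2 ≤ q)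
    (hd : 0 ≤ d) (hdm : d ≤ m) :
    m ^ q + p * (p - 1) / 4 * d ^ q ≤ (((m + d) ^ p + (m - d) ^ p) / 2) ^ (q / p) := by
  have hp₀ : p ≠ 0 := by linarith
  rcases (hd.trans hdm).eq_or_lt with rfl | hm
  · obtain rfl : d = 0 := le_antisymm hdm hd
    simp [Real.zero_rpow hp₀, Real.zero_rpow (show q ≠ 0 by linarith),
      Real.zero_rpow (div_ne_zero (show q ≠ 0 by linarith) hp₀)]
  obtain ⟨x, rfl⟩ : ∃ x, d = m * x := ⟨d / m, (mul_div_cancel₀ d hm.ne').symm⟩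
  have hx₀ : 0 ≤ x := nonneg_of_mul_nonneg_right hd hm
  have hx₁ : x ≤ 1 := le_of_mul_le_mul_left (by simpa using hdm) hm
  have : 0 ≤ p * (p - 1) / 4 := by nlinarith
  have hx_rpow : x ^ q ≤ x ^ 2 := by
    rw [← Real.rpow_two]
    exact Real.rpow_le_rpow_of_exponent_ge' hx₀ hx₁ zero_le_two hq
  have hmean : 1 + p * (p - 1) / 4 * x ^ q ≤ ((1 + x) ^ p + (1 - x) ^ p) / 2 :=
    le_trans (by gcongr) (one_add_mul_sq_le_rpow_mean hp hx₀ hx₁)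
  have hmean₁ : 1 ≤ ((1 + x) ^ p + (1 - x) ^ p) / 2 :=
    le_trans (le_add_of_nonneg_right (by positivity)) hmean
  calc m ^ q + p * (p - 1) / 4 * (m * x) ^ q = m ^ q * (1 + p * (p - 1) / 4 * x ^ q) := by
        rw [Real.mul_rpow hm.le hx₀]
        ring
    _ ≤ m ^ q * (((1 + x) ^ p + (1 - x) ^ p) / 2) ^ (q / p) := by
        gcongr
        exact hmean.trans (Real.self_le_rpow_of_one_le hmean₁ ((one_le_div (by linarith)).2 hpq))
    _ = (m ^ p * (((1 + x) ^ p + (1 - x) ^ p) / 2)) ^ (q / p) := by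
        rw [Real.mul_rpow (by positivity) (by linarith), ← Real.rpow_mul hm.le,
          mul_div_cancel₀ q hp₀]
    _ = (((m + m * x) ^ p + (m - m * x) ^ p) / 2) ^ (q / p) := by
        rw [← mul_one_add, ← mul_one_sub, Real.mul_rpow hm.le (by linarith),
          Real.mul_rpow hm.le (by linarith), mul_div_assoc', mul_add]

theorem sub_rpow_le {m x q : ℝ} (hx : 0 ≤ x) (hxm : x ≤ m) (hq : 1 ≤ q) :
    (m - x) ^ q ≤ m ^ q - m ^ (q - 1) * x := by
  have hm : 0 ≤ m := hx.trans hxm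
  have hsplit : ∀ y : ℝ, 0 ≤ y → y ^ q = y ^ (q - 1) * y := fun y hy ↦ by
    rw [← Real.rpow_add_one' hy (by linarith), sub_add_cancel]
  rw [hsplit m hm, hsplit (m - x) (sub_nonneg.2 hxm), ← mul_sub]
  gcongr ?_ ^ (q - 1) * _
  all_goals linarith

theorem exists_norm_eq_one_smul_eq {X : Type*} [NormedAddCommGroup X] [NormedSpace ℝ X]
    [Nontrivial X] (x : X) : ∃ u : X, ‖u‖ = 1 ∧ ‖x‖ • u = x := by
  rcases eq_or_ne x 0 with rfl | hx
  · obtain ⟨u, hu⟩ := exists_norm_eq X zero_le_one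
    exact ⟨u, hu, by simp⟩
  · exact ⟨NormedSpace.normalize x, NormedSpace.norm_normalize hx,
      NormedSpace.norm_smul_normalize x⟩

/-- The modulus of convexity of `X` satisfies `δ_X(ε) ≥ (η ε) ^ q` for every `ε ∈ (0, 1)`. -/
def HasPowerTypeConvexity (X : Type*) [NormedAddCommGroup X] (η q : ℝ) : Prop :=
  ∀ ε ∈ Set.Ioo (0 : ℝ) 1, ∀ x y : X, ‖x‖ = 1 → ‖y‖ = 1 → ε ≤ ‖x - y‖ →
    ‖x + y‖ ≤ 2 * (1 - (η * ε) ^ q)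

/-- The constant of the two-point inequality in a space whose modulus of convexity is at least
`(η ε) ^ q`: the first entry controls the angle between two vectors, the second one the
difference of their lengths. -/
noncomputable def convexityConst (η p q : ℝ) : ℝ :=
  min (2 * (η / 3) ^ q) (p * (p - 1) / 4 / 2 ^ (q - 1))

theorem convexityConst_pos {η p : ℝ} (hη : 0 < η) (hp : 1 < p) (q : ℝ) :
    0 < convexityConst η p q := by
  have : 0 < p - 1 := sub_pos.2 hp
  exact lt_min (by positivity) (by positivity)

namespace HasPowerTypeConvexity

variable {X : Type*} [NormedAddCommGroup X] {η p q : ℝ}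

theorem norm_add_le_of_norm_eq_one (hX : HasPowerTypeConvexity X η q) (hq : q ≠ 0) {u v : X}
    (hu : ‖u‖ = 1) (hv : ‖v‖ = 1) : ‖u + v‖ ≤ 2 * (1 - (η * (‖u - v‖ / 3)) ^ q) := by
  rcases (norm_nonneg (u - v)).eq_or_lt with he | he
  · rw [← he, zero_div, mul_zero, Real.zero_rpow hq]
    linarith [norm_add_le u v]
  -- `‖u - v‖` ranges up to `2` but the hypothesis only covers `ε < 1`, hence the factor `1 / 3`.
  · exact hX (‖u - v‖ / 3) ⟨by positivity, by linarith [norm_sub_le u v]⟩ u v hu hv (by linarith)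

variable [NormedSpace ℝ X]

theorem half_norm_smul_add_smul_rpow_le (hX : HasPowerTypeConvexity X η q) (hη : 0 ≤ η)
    (hq : 1 ≤ q) {u v : X} (hu : ‖u‖ = 1) (hv : ‖v‖ = 1) {a b : ℝ} (hb : 0 ≤ b) (hab : b ≤ a) :
    (‖a • u + b • v‖ / 2) ^ q ≤ ((a + b) / 2) ^ q - (b * (η * (‖u - v‖ / 3))) ^ q := by
  set δ := (η * (‖u - v‖ / 3)) ^ q
  have : 0 ≤ δ := by positivity
  have hhalf : ‖a • u + b • v‖ / 2 ≤ (a + b) / 2 - b * δ := by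
    have hsplit : a • u + b • v = b • (u + v) + (a - b) • u := by module
    have := norm_add_le (b • (u + v)) ((a - b) • u)
    rw [← hsplit, norm_smul_of_nonneg hb, norm_smul_of_nonneg (sub_nonneg.2 hab), hu] at this
    nlinarith [hX.norm_add_le_of_norm_eq_one (by linarith) hu hv]
  calc (‖a • u + b • v‖ / 2) ^ q ≤ ((a + b) / 2 - b * δ) ^ q := by gcongr
    _ ≤ ((a + b) / 2) ^ q - ((a + b) / 2) ^ (q - 1) * (b * δ) :=
        sub_rpow_le (by positivity)
          (sub_nonneg.1 (le_trans (div_nonneg (norm_nonneg _) zero_le_two) hhalf)) hq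
    _ ≤ ((a + b) / 2) ^ q - b ^ (q - 1) * (b * δ) := by
        gcongr
        linarith
    _ = ((a + b) / 2) ^ q - (b * (η * (‖u - v‖ / 3))) ^ q := by
        rw [Real.mul_rpow hb (by positivity), ← mul_assoc, ← Real.rpow_add_one' hb (by linarith),
          sub_add_cancel]

theorem convexityConst_mul_half_norm_smul_sub_smul_rpow_le (hη : 0 < η) (hp : 1 < p)
    (hq : 1 ≤ q) {u v : X} (hu : ‖u‖ = 1) {a b : ℝ} (hb : 0 ≤ b) (hab : b ≤ a) :
    convexityConst η p q * (‖a • u - b • v‖ / 2) ^ q ≤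
      (b * (η * (‖u - v‖ / 3))) ^ q + p * (p - 1) / 4 * ((a - b) / 2) ^ q := by
  set c := convexityConst η p q
  have hc : 0 < c := convexityConst_pos hη hp q
  have hab₀ : 0 ≤ a - b := sub_nonneg.2 hab
  have hc₁ : c ≤ 2 * (η / 3) ^ q := min_le_left _ _
  have hc₂ : c * 2 ^ (q - 1) ≤ p * (p - 1) / 4 :=
    (le_div_iff₀ (by positivity)).1 (min_le_right _ _)
  have hhalf : ‖a • u - b • v‖ / 2 ≤ b * ‖u - v‖ / 2 + (a - b) / 2 := by
    have hsplit : a • u - b • v = b • (u - v) + (a - b) • u := by module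
    have := norm_add_le (b • (u - v)) ((a - b) • u)
    rw [← hsplit, norm_smul_of_nonneg hb, norm_smul_of_nonneg hab₀, hu] at this
    linarith
  have htwo : (2 : ℝ) ^ q = 2 ^ (q - 1) * 2 := by
    rw [← Real.rpow_add_one two_ne_zero, sub_add_cancel]
  calc c * (‖a • u - b • v‖ / 2) ^ q
      ≤ c * (2 ^ (q - 1) * ((b * ‖u - v‖ / 2) ^ q + ((a - b) / 2) ^ q)) := by
        gcongr
        exact (Real.rpow_le_rpow (by positivity) hhalf (by linarith)).trans
          (rpow_add_le (by positivity) (by positivity) hq)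
    _ = c * ((b * ‖u - v‖) ^ q / 2) + c * 2 ^ (q - 1) * ((a - b) / 2) ^ q := by
        rw [Real.div_rpow (by positivity) zero_le_two, htwo]
        field_simp
    _ ≤ 2 * (η / 3) ^ q * ((b * ‖u - v‖) ^ q / 2) + p * (p - 1) / 4 * ((a - b) / 2) ^ q := by
        gcongr
    _ = (b * (η * (‖u - v‖ / 3))) ^ q + p * (p - 1) / 4 * ((a - b) / 2) ^ q := by
        rw [show b * (η * (‖u - v‖ / 3)) = η / 3 * (b * ‖u - v‖) by ring,
          Real.mul_rpow (div_nonneg hη.le zero_le_three) (by positivity)]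
        ring

theorem twoPointConvex (hX : HasPowerTypeConvexity X η q) (hη : 0 < η) (hp : 1 < p)
    (hpq : p ≤ q) (hq : 2 ≤ q) : TwoPointConvex X (convexityConst η p q) p q := by
  intro x y
  wlog hyx : ‖y‖ ≤ ‖x‖ generalizing x y
  · have := this y x (le_of_not_ge hyx)
    rwa [add_comm y x, norm_sub_rev y x, add_comm (‖y‖ ^ p)] at this
  rcases subsingleton_or_nontrivial X with _ | _
  · have : p ≠ 0 := by linarith
    have : q ≠ 0 := by linarith
    simp [Subsingleton.elim x 0, Subsingleton.elim y 0, Real.zero_rpow, *]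
  obtain ⟨u, hu, hxu⟩ := exists_norm_eq_one_smul_eq x
  obtain ⟨v, hv, hyv⟩ := exists_norm_eq_one_smul_eq y
  have hadd := hX.half_norm_smul_add_smul_rpow_le hη.le (by linarith) hu hv (norm_nonneg y) hyx
  have hsub := convexityConst_mul_half_norm_smul_sub_smul_rpow_le (v := v) hη hp
    (show 1 ≤ q by linarith) hu (norm_nonneg y) hyx
  have hmean := rpow_add_mul_rpow_le_rpow_mean hp.le hpq hq
    (show 0 ≤ (‖x‖ - ‖y‖) / 2 by linarith)
    (show (‖x‖ - ‖y‖) / 2 ≤ (‖x‖ + ‖y‖) / 2 by linarith [norm_nonneg y])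
  rw [hxu, hyv] at hadd hsub
  ring_nf at hadd hsub hmean ⊢
  linarith

end HasPowerTypeConvexity

theorem rpow_integral_add_rpow_integral_le {α : Type*} [MeasurableSpace α] {μ : Measure α}
    {φ ψ χ : α → ℝ} {r : ℝ} (hr : 1 ≤ r) (hφ : Integrable φ μ) (hψ : Integrable ψ μ)
    (hχ : Integrable χ μ) (hφ₀ : ∀ a, 0 ≤ φ a) (hψ₀ : ∀ a, 0 ≤ ψ a) (hχ₀ : ∀ a, 0 ≤ χ a)
    (h : ∀ᵐ a ∂μ, φ a ^ r + ψ a ^ r ≤ χ a ^ r) :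
    (∫ a, φ a ∂μ) ^ r + (∫ a, ψ a ∂μ) ^ r ≤ (∫ a, χ a ∂μ) ^ r := by
  have hr₀ : 0 < r := by linarith
  have : Fact (1 ≤ ENNReal.ofReal r) := ⟨ENNReal.one_le_ofReal.2 hr⟩
  -- Minkowski's inequality is the triangle inequality for the integral of `(φ, ψ)` in `ℓ_r²`.
  let L := (WithLp.prodContinuousLinearEquiv (ENNReal.ofReal r) ℝ ℝ ℝ).symm
  have hnorm_le : ∀ {x y z : ℝ}, 0 ≤ x → 0 ≤ y → 0 ≤ z →
      (‖L (x, y)‖ ≤ z ↔ x ^ r + y ^ r ≤ z ^ r) := by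
    intro x y z hx hy hz
    have htoReal := ENNReal.toReal_ofReal hr₀.le
    rw [WithLp.prod_norm_eq_add (htoReal.symm ▸ hr₀), htoReal, one_div,
      Real.rpow_inv_le_iff_of_pos (by positivity) hz hr₀]
    simp [L, abs_of_nonneg hx, abs_of_nonneg hy]
  rw [← hnorm_le (integral_nonneg hφ₀) (integral_nonneg hψ₀) (integral_nonneg hχ₀),
    ← integral_pair hφ hψ, ← L.integral_comp_comm]
  exact norm_integral_le_of_norm_le hχ
    (h.mono fun a ha ↦ (hnorm_le (hφ₀ a) (hψ₀ a) (hχ₀ a)).2 ha)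

namespace TwoPointConvex

variable {E : Type*} [NormedAddCommGroup E] {c p q : ℝ}

theorem of_norm_rpow_eq_integral {F α : Type*} [NormedAddCommGroup F] [MeasurableSpace α]
    {μ : Measure α} (hE : TwoPointConvex E c p q) (hc : 0 ≤ c) (hp : 0 < p) (hpq : p ≤ q)
    (J : F → α → E) (hJ : ∀ u, Integrable (fun a ↦ ‖J u a‖ ^ p) μ)
    (hJ_norm : ∀ u, ‖u‖ ^ p = ∫ a, ‖J u a‖ ^ p ∂μ) (hJ_add : ∀ u v, J (u + v) =ᵐ[μ] J u + J v)
    (hJ_sub : ∀ u v, J (u - v) =ᵐ[μ] J u - J v) : TwoPointConvex F c p q := by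
  intro u v
  have hrpow : ∀ {x : ℝ}, 0 ≤ x → (x ^ p) ^ (q / p) = x ^ q := fun hx ↦ by
    rw [← Real.rpow_mul hx, mul_div_cancel₀ _ hp.ne']
  have hcpow : (c ^ (p / q)) ^ (q / p) = c := by
    rw [← Real.rpow_mul hc, div_mul_div_cancel₀ (by linarith), div_self hp.ne', Real.rpow_one]
  have hhalf : ∀ w, ∫ a, ‖J w a‖ ^ p / 2 ^ p ∂μ = (‖w‖ / 2) ^ p := fun w ↦ by
    rw [integral_div, ← hJ_norm, Real.div_rpow (norm_nonneg w) zero_le_two]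
  have hmean : ∫ a, (‖J u a‖ ^ p + ‖J v a‖ ^ p) / 2 ∂μ = (‖u‖ ^ p + ‖v‖ ^ p) / 2 := by
    rw [integral_div, integral_add (hJ u) (hJ v), ← hJ_norm, ← hJ_norm]
  have hmain := rpow_integral_add_rpow_integral_le (μ := μ) (r := q / p)
    ((one_le_div hp).2 hpq) ((hJ (u + v)).div_const (2 ^ p))
    (((hJ (u - v)).div_const (2 ^ p)).const_mul (c ^ (p / q)))
    (((hJ u).add (hJ v)).div_const 2) (fun a ↦ by positivity) (fun a ↦ by positivity)
    (fun a ↦ div_nonneg (add_nonneg (by positivity) (by positivity)) zero_le_two) ?_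
  · simp only [Pi.add_apply] at hmain
    rwa [integral_const_mul, hhalf, hhalf, hmean, Real.mul_rpow (by positivity) (by positivity),
      hcpow, hrpow (by positivity), hrpow (by positivity)] at hmain
  · filter_upwards [hJ_add u v, hJ_sub u v] with a ha hs
    rw [ha, hs, ← Real.div_rpow (norm_nonneg _) zero_le_two,
      ← Real.div_rpow (norm_nonneg _) zero_le_two, Real.mul_rpow (by positivity) (by positivity),
      hcpow, hrpow (by positivity), hrpow (by positivity)]
    exact hE (J u a) (J v a)

variable {P : ENNReal} [Fact (1 ≤ P)]

theorem withLp_prod (hE : TwoPointConvex E c P.toReal q) (hc : 0 ≤ c) (hP : P ≠ ⊤)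
    (hPq : P.toReal ≤ q) : TwoPointConvex (WithLp P (E × E)) c P.toReal q := by
  have hP₀ : 0 < P.toReal := ENNReal.toReal_pos (zero_lt_one.trans_le Fact.out).ne' hP
  refine hE.of_norm_rpow_eq_integral (μ := Measure.count) hc hP₀ hPq
    (fun u (b : Bool) ↦ cond b u.fst u.snd) (fun u ↦ .of_finite) (fun u ↦ ?_)
    (fun u v ↦ .of_forall fun b ↦ by cases b <;> rfl)
    (fun u v ↦ .of_forall fun b ↦ by cases b <;> rfl)
  rw [WithLp.prod_norm_eq_add hP₀, one_div, Real.rpow_inv_rpow (by positivity) hP₀.ne']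
  simp [integral_fintype]

theorem lp {α : Type*} [MeasurableSpace α] {μ : Measure α} (hE : TwoPointConvex E c P.toReal q)
    (hc : 0 ≤ c) (hP : P ≠ ⊤) (hPq : P.toReal ≤ q) : TwoPointConvex (Lp E P μ) c P.toReal q := by
  have hP₁ : P ≠ 0 := (zero_lt_one.trans_le Fact.out).ne'
  have hP₀ : 0 < P.toReal := ENNReal.toReal_pos hP₁ hP
  refine hE.of_norm_rpow_eq_integral hc hP₀ hPq (fun u ↦ ⇑u)
    (fun u ↦ (Lp.memLp u).integrable_norm_rpow hP₁ hP) (fun u ↦ ?_) Lp.coeFn_add Lp.coeFn_sub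
  rw [Lp.norm_def, toReal_eLpNorm (Lp.aestronglyMeasurable u),
    lpNorm_eq_integral_norm_rpow_toReal hP₁ hP (Lp.aestronglyMeasurable u),
    Real.rpow_inv_rpow (integral_nonneg fun a ↦ by positivity) hP₀.ne']

end TwoPointConvex

section DyadicLIntegral

variable {G : ℝ → ENNReal}

theorem setLIntegral_Ioc_mul_left_div (G : ℝ → ENNReal) {c : ℝ} (hc : 0 < c) (a b : ℝ) :
    ∫⁻ t in Set.Ioc (c * a) (c * b), G t / ENNReal.ofReal t =
      ∫⁻ t in Set.Ioc a b, G (c * t) / ENNReal.ofReal t := by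
  rw [← Set.image_mul_left_Ioc hc, lintegral_image_eq_lintegral_abs_deriv_mul measurableSet_Ioc
    (fun t _ ↦ ((hasDerivAt_id' t).const_mul c).hasDerivWithinAt)
    (mul_right_injective₀ hc.ne').injOn]
  refine lintegral_congr fun t ↦ ?_
  have hc₀ : ENNReal.ofReal c ≠ 0 := (ENNReal.ofReal_pos.2 hc).ne'
  rw [mul_one, abs_of_pos hc, ← mul_div_assoc, ENNReal.ofReal_mul hc.le,
    ENNReal.mul_div_mul_left _ _ hc₀ ENNReal.ofReal_ne_top]

theorem setLIntegral_Ioc_two_pow_div_le (G : ℝ → ENNReal) {a : ℝ} (ha : 0 ≤ a) (n : ℕ) :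
    ∫⁻ t in Set.Ioc a (2 ^ n * a), G t / ENNReal.ofReal t ≤
      ∫⁻ t in Set.Ioc a (2 * a), (∑ k ∈ Finset.range n, G (2 ^ k * t)) / ENNReal.ofReal t := by
  induction n with
  | zero => simp
  | succ n ih =>
    have hpow : (1 : ℝ) ≤ 2 ^ n := one_le_pow₀ one_le_two
    rw [pow_succ, mul_assoc, ← Set.Ioc_union_Ioc_eq_Ioc (b := 2 ^ n * a) (by nlinarith)
      (by nlinarith)]
    simp only [Finset.sum_range_succ, ENNReal.add_div]
    refine (lintegral_union_le _ _ _).trans (le_trans ?_ (le_lintegral_add _ _))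
    exact add_le_add ih (setLIntegral_Ioc_mul_left_div G (pow_pos two_pos n) a (2 * a)).le

theorem setLIntegral_Ioc_two_pow_div_le_of_sum_le {R : ENNReal}
    (h : ∀ t, 0 < t → ∀ n : ℕ, ∑ k ∈ Finset.range n, G (2 ^ k * t) ≤ R) {a : ℝ} (ha : 0 < a)
    (n : ℕ) : ∫⁻ t in Set.Ioc a (2 ^ n * a), G t / ENNReal.ofReal t ≤ R := by
  have ha₀ : ENNReal.ofReal a ≠ 0 := (ENNReal.ofReal_pos.2 ha).ne'
  calc ∫⁻ t in Set.Ioc a (2 ^ n * a), G t / ENNReal.ofReal t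
      ≤ ∫⁻ t in Set.Ioc a (2 * a), (∑ k ∈ Finset.range n, G (2 ^ k * t)) / ENNReal.ofReal t :=
        setLIntegral_Ioc_two_pow_div_le G ha.le n
    _ ≤ ∫⁻ _ in Set.Ioc a (2 * a), R / ENNReal.ofReal a :=
        setLIntegral_mono' measurableSet_Ioc fun t ht ↦
          ENNReal.div_le_div (h t (ha.trans ht.1) n) (ENNReal.ofReal_le_ofReal ht.1.le)
    _ = R := by
        rw [setLIntegral_const, Real.volume_Ioc, two_mul, add_sub_cancel_right,
          ENNReal.div_mul_cancel ha₀ ENNReal.ofReal_ne_top]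

theorem Ioi_zero_eq_iUnion_Ioc_two_pow :
    Set.Ioi (0 : ℝ) = ⋃ n : ℕ, Set.Ioc (2 ^ n)⁻¹ (2 ^ n) := by
  ext x
  simp only [Set.mem_Ioi, Set.mem_iUnion, Set.mem_Ioc]
  constructor
  · intro hx
    obtain ⟨n, hn⟩ := pow_unbounded_of_one_lt (max x x⁻¹) one_lt_two
    exact ⟨n, inv_lt_of_inv_lt₀ hx ((le_max_right _ _).trans_lt hn),
      ((le_max_left _ _).trans_lt hn).le⟩
  · rintro ⟨n, hn, -⟩
    exact lt_trans (by positivity) hn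

theorem setLIntegral_Ioi_div_le_of_sum_two_pow_le {R : ENNReal}
    (h : ∀ t, 0 < t → ∀ n : ℕ, ∑ k ∈ Finset.range n, G (2 ^ k * t) ≤ R) :
    ∫⁻ t in Set.Ioi 0, G t / ENNReal.ofReal t ≤ R := by
  have hmono : Monotone fun n : ℕ ↦ Set.Ioc ((2 : ℝ) ^ n)⁻¹ (2 ^ n) := fun m n hmn ↦ by
    dsimp only
    gcongr <;> norm_num
  rw [Ioi_zero_eq_iUnion_Ioc_two_pow, setLIntegral_iUnion_of_directed _ hmono.directed_le]
  refine iSup_le fun n ↦ ?_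
  have hn := setLIntegral_Ioc_two_pow_div_le_of_sum_le h (a := (2 ^ n)⁻¹) (by positivity) (n + n)
  rwa [pow_add, mul_inv_cancel_right₀ (by positivity)] at hn

end DyadicLIntegral

section Flow

variable {X : Type*} [NormedAddCommGroup X] [NormedSpace ℝ X]

theorem enorm_sub_rpow_le_lintegral_deriv {γ γ' : ℝ → X} (hγ : ∀ r, HasDerivAt γ (γ' r) r)
    (hγ' : Continuous γ') {p : ℝ} (hp : 1 ≤ p) {a b : ℝ} (hab : a ≤ b) :
    ‖γ b - γ a‖ₑ ^ p ≤ ENNReal.ofReal (b - a) ^ (p - 1) * ∫⁻ r in Set.Icc a b, ‖γ' r‖ₑ ^ p := by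
  have hp₀ : 0 < p := by linarith
  have hderiv : deriv γ = γ' := funext fun r ↦ (hγ r).deriv
  have hcontDiff : ContDiff ℝ 1 γ :=
    contDiff_one_iff_deriv.2 ⟨fun r ↦ (hγ r).differentiableAt, hderiv ▸ hγ'⟩
  have hL1 : ‖γ b - γ a‖ₑ ≤ eLpNorm γ' 1 (volume.restrict (Set.Icc a b)) := by
    rw [eLpNorm_one_eq_lintegral_enorm, ← hderiv]
    exact enorm_sub_le_lintegral_deriv_of_contDiffOn_Icc hcontDiff.contDiffOn hab
  have hLp := hL1.trans (eLpNorm_le_eLpNorm_mul_rpow_measure_univ (q := ENNReal.ofReal p)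
    (ENNReal.one_le_ofReal.2 hp) hγ'.aestronglyMeasurable)
  rw [eLpNorm_eq_lintegral_rpow_enorm_toReal (by simpa using hp₀) ENNReal.ofReal_ne_top,
    ENNReal.toReal_ofReal hp₀.le, Measure.restrict_apply_univ, Real.volume_Icc,
    ENNReal.toReal_one] at hLp
  refine (ENNReal.rpow_le_rpow hLp hp₀.le).trans_eq ?_
  rw [ENNReal.mul_rpow_of_nonneg _ _ hp₀.le, ← ENNReal.rpow_mul, ← ENNReal.rpow_mul,
    one_div_mul_cancel hp₀.ne', ENNReal.rpow_one, mul_comm, sub_mul,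
    one_div_mul_cancel hp₀.ne', div_one, one_mul]

theorem lintegral_lintegral_comp_measurePreserving {α β : Type*} [MeasurableSpace α]
    [MeasurableSpace β] {μ : Measure α} {ν : Measure β} [SFinite μ] [SFinite ν] {φ : β → α → α}
    (hφ : Measurable (Function.uncurry φ)) (hφμ : ∀ r, MeasurePreserving (φ r) μ μ)
    {F : α → ENNReal} (hF : Measurable F) :
    ∫⁻ h, ∫⁻ r, F (φ r h) ∂ν ∂μ = ν Set.univ * ∫⁻ h, F h ∂μ := by
  rw [lintegral_lintegral_swap (f := fun h r ↦ F (φ r h))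
    ((hF.comp hφ).comp measurable_swap).aemeasurable]
  simp_rw [fun r ↦ (hφμ r).lintegral_comp hF]
  rw [lintegral_const, mul_comm]

theorem eLpNorm_flow_sub_le {α : Type*} [MeasurableSpace α] [TopologicalSpace α]
    [SecondCountableTopology α] [BorelSpace α] {μ : Measure α} [SFinite μ] {φ : ℝ → α → α}
    (hφ : Continuous (Function.uncurry φ)) (hφ₀ : ∀ h, φ 0 h = h)
    (hφμ : ∀ r, MeasurePreserving (φ r) μ μ) {f g : α → X} (hg : Continuous g)
    (hfg : ∀ h r, HasDerivAt (fun r ↦ f (φ r h)) (g (φ r h)) r) {P : ENNReal} (hP : 1 ≤ P)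
    (hP' : P ≠ ⊤) {s : ℝ} (hs : 0 ≤ s) :
    eLpNorm (f ∘ φ s - f) P μ ≤ ENNReal.ofReal s * eLpNorm g P μ := by
  have hP₀ : P ≠ 0 := (zero_lt_one.trans_le hP).ne'
  set p := P.toReal
  have hp : 1 ≤ p := (ENNReal.ofReal_le_iff_le_toReal hP').1 (by simpa using hP)
  have hp₀ : 0 < p := by linarith
  have hgp : Measurable fun h ↦ ‖g h‖ₑ ^ p := hg.enorm.measurable.pow_const p
  have hpointwise : ∀ h, ‖f (φ s h) - f h‖ₑ ^ p ≤
      ENNReal.ofReal s ^ (p - 1) * ∫⁻ r in Set.Icc 0 s, ‖g (φ r h)‖ₑ ^ p := fun h ↦ by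
    simpa only [hφ₀, sub_zero] using enorm_sub_rpow_le_lintegral_deriv (hfg h)
      (hg.comp (hφ.comp (Continuous.prodMk_left h))) hp hs
  rw [eLpNorm_eq_lintegral_rpow_enorm_toReal hP₀ hP',
    eLpNorm_eq_lintegral_rpow_enorm_toReal hP₀ hP', one_div, ENNReal.rpow_inv_le_iff hp₀,
    ENNReal.mul_rpow_of_nonneg _ _ hp₀.le, ENNReal.rpow_inv_rpow hp₀.ne']
  calc ∫⁻ h, ‖f (φ s h) - f h‖ₑ ^ p ∂μ
      ≤ ∫⁻ h, ENNReal.ofReal s ^ (p - 1) * (∫⁻ r in Set.Icc 0 s, ‖g (φ r h)‖ₑ ^ p) ∂μ :=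
        lintegral_mono hpointwise
    _ = ENNReal.ofReal s ^ (p - 1) * (ENNReal.ofReal s * ∫⁻ h, ‖g h‖ₑ ^ p ∂μ) := by
        rw [lintegral_const_mul' _ _
          (ENNReal.rpow_ne_top_of_nonneg (by linarith) ENNReal.ofReal_ne_top),
          lintegral_lintegral_comp_measurePreserving hφ.measurable hφμ hgp,
          Measure.restrict_apply_univ, Real.volume_Icc, sub_zero]
    _ = ENNReal.ofReal s ^ p * ∫⁻ h, ‖g h‖ₑ ^ p ∂μ := by
        rw [← mul_assoc]
        nth_rewrite 2 [← ENNReal.rpow_one (ENNReal.ofReal s)]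
        rw [← ENNReal.rpow_add_of_nonneg _ _ (by linarith) zero_le_one, sub_add_cancel]

end Flow

theorem eLpNorm_comp_comp_sub_comp_comp_le {α E : Type*} [MeasurableSpace α]
    [NormedAddCommGroup E] {μ : Measure α} {σ τ : α → α} (hσ : MeasurePreserving σ μ μ)
    (hτ : MeasurePreserving τ μ μ) {f : α → E} (hf : AEStronglyMeasurable f μ) {P : ENNReal}
    (hP : 1 ≤ P) :
    eLpNorm (f ∘ τ ∘ σ - f ∘ σ ∘ τ) P μ ≤
      2 * (eLpNorm (f ∘ σ - f) P μ + eLpNorm (f ∘ τ - f) P μ) := by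
  set u := f ∘ σ - f
  set v := f ∘ τ - f
  have hu : AEStronglyMeasurable u μ := (hf.comp_measurePreserving hσ).sub hf
  have hv : AEStronglyMeasurable v μ := (hf.comp_measurePreserving hτ).sub hf
  have hdecomp : f ∘ τ ∘ σ - f ∘ σ ∘ τ = (v ∘ σ + u) - (u ∘ τ + v) := by
    funext h
    simp only [u, v, Function.comp_apply, Pi.sub_apply, Pi.add_apply]
    abel
  rw [hdecomp]
  calc eLpNorm ((v ∘ σ + u) - (u ∘ τ + v)) P μ
      ≤ (eLpNorm (v ∘ σ) P μ + eLpNorm u P μ) + (eLpNorm (u ∘ τ) P μ + eLpNorm v P μ) :=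
        (eLpNorm_sub_le ((hv.comp_measurePreserving hσ).add hu)
          ((hu.comp_measurePreserving hτ).add hv) hP).trans
          (add_le_add (eLpNorm_add_le (hv.comp_measurePreserving hσ) hu hP)
            (eLpNorm_add_le (hu.comp_measurePreserving hτ) hv hP))
    _ = 2 * (eLpNorm u P μ + eLpNorm v P μ) := by
        rw [eLpNorm_comp_measurePreserving hv hσ, eLpNorm_comp_measurePreserving hu hτ]
        ring

namespace HR

/-- Right translation by the horizontal element `(r, 0, 0)`. -/
def amul (r : ℝ) (h : HR) : HR := (h.1 + r, h.2.1, h.2.2)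

/-- Right translation by the horizontal element `(0, r, 0)`. -/
def bmul (r : ℝ) (h : HR) : HR := (h.1, h.2.1 + r, h.2.2 + h.1 * r)

theorem continuous_uncurry_amul : Continuous (Function.uncurry amul) := by
  unfold Function.uncurry amul
  fun_prop

theorem continuous_uncurry_bmul : Continuous (Function.uncurry bmul) := by
  unfold Function.uncurry bmul
  fun_prop

theorem measurePreserving_amul (r : ℝ) : MeasurePreserving (amul r) volume volume :=
  (measurePreserving_add_right (volume : Measure ℝ) r).prod
    (MeasurePreserving.id (volume : Measure (ℝ × ℝ)))

theorem measurePreserving_bmul (r : ℝ) : MeasurePreserving (bmul r) volume volume :=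
  (MeasurePreserving.id (volume : Measure ℝ)).skew_product
    (g := fun x (w : ℝ × ℝ) ↦ w + (r, x * r)) (by fun_prop)
    (.of_forall fun x ↦ map_add_right_eq_self volume (r, x * r))

theorem vmul_eq_add (t : ℝ) (h : HR) : vmul t h = h + (0, 0, t) := by
  simp [vmul, Prod.ext_iff]

theorem measurePreserving_vmul (t : ℝ) : MeasurePreserving (vmul t) volume volume :=
  (MeasurePreserving.id (volume : Measure ℝ)).prod
    ((MeasurePreserving.id (volume : Measure ℝ)).prod
      (measurePreserving_add_right (volume : Measure ℝ) t))

theorem vmul_amul_bmul (s : ℝ) (h : HR) :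
    vmul (s * s) (amul s (bmul s h)) = bmul s (amul s h) := by
  simp only [vmul, amul, bmul, Prod.mk.injEq, true_and]
  ring

theorem vmul_vmul (s t : ℝ) (h : HR) : vmul s (vmul t h) = vmul (t + s) h := by
  simp [vmul, add_assoc]

variable {X : Type*} [NormedAddCommGroup X] [NormedSpace ℝ X] {f g : HR → X}

theorem hasDerivAt_amul (hf : Differentiable ℝ f) (h : HR) (r : ℝ) :
    HasDerivAt (fun r ↦ f (amul r h)) (da f (amul r h)) r := by
  have hline : HasDerivAt (fun r ↦ amul r h) ((1, 0, 0) : HR) r :=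
    ((hasDerivAt_id r).const_add h.1).prodMk
      ((hasDerivAt_const r h.2.1).prodMk (hasDerivAt_const r h.2.2))
  exact (hf (amul r h)).hasFDerivAt.comp_hasDerivAt r hline

theorem hasDerivAt_bmul (hf : Differentiable ℝ f) (h : HR) (r : ℝ) :
    HasDerivAt (fun r ↦ f (bmul r h)) (db f (bmul r h)) r := by
  have hline : HasDerivAt (fun r ↦ bmul r h) ((0, 1, h.1) : HR) r :=
    (hasDerivAt_const r h.1).prodMk (((hasDerivAt_id r).const_add h.2.1).prodMk
      ((hasDerivAt_const_mul h.1).const_add h.2.2))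
  have hdir : ((0, 1, h.1) : HR) = (0, 1, 0) + h.1 • (0, 0, 1) := by simp
  rw [hdir] at hline
  simpa only [db, map_add, map_smul] using!
    (hf (bmul r h)).hasFDerivAt.comp_hasDerivAt r hline

theorem continuous_da (hf : ContDiff ℝ 1 f) : Continuous (da f) :=
  (hf.continuous_fderiv one_ne_zero).clm_apply continuous_const

theorem continuous_db (hf : ContDiff ℝ 1 f) : Continuous (db f) :=
  have hf' := hf.continuous_fderiv one_ne_zero
  (hf'.clm_apply continuous_const).add
    (continuous_fst.smul (hf'.clm_apply continuous_const))

theorem da_comp_vmul (f : HR → X) (t : ℝ) : da (f ∘ vmul t) = da f ∘ vmul t := by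
  funext h
  simp only [da, Function.comp_def, vmul_eq_add, fderiv_comp_add_right]

theorem db_comp_vmul (f : HR → X) (t : ℝ) : db (f ∘ vmul t) = db f ∘ vmul t := by
  funext h
  simp [db, Function.comp_def, vmul_eq_add, fderiv_comp_add_right]

/-- The horizontal gradient `∇_ℍ f = (∂_a f, ∂_b f)`; the exponent `P` only selects the norm
`‖·‖_{ℓ_P²(X)}` on the pair. -/
noncomputable def hGrad (P : ENNReal) (f : HR → X) (h : HR) : WithLp P (X × X) :=
  WithLp.toLp P (da f h, db f h)

theorem hGrad_add (P : ENNReal) (hf : Differentiable ℝ f) (hg : Differentiable ℝ g) :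
    hGrad P (f + g) = hGrad P f + hGrad P g := by
  funext h
  simp only [hGrad, da, db, Pi.add_apply, fderiv_add (hf h) (hg h), add_apply,
    ← WithLp.toLp_add, Prod.mk_add_mk, smul_add]
  rw [add_add_add_comm]

theorem hGrad_smul (P : ENNReal) (c : ℝ) (hf : Differentiable ℝ f) :
    hGrad P (c • f) = c • hGrad P f := by
  funext h
  simp only [hGrad, da, db, Pi.smul_apply, fderiv_const_smul (hf h), smul_apply,
    ← WithLp.toLp_smul, Prod.smul_mk, smul_add, smul_comm h.1]

theorem hGrad_comp_vmul (P : ENNReal) (f : HR → X) (t : ℝ) :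
    hGrad P (f ∘ vmul t) = hGrad P f ∘ vmul t := by
  funext h
  simp only [hGrad, da_comp_vmul, db_comp_vmul, Function.comp_apply]

section

variable {P : ENNReal} [Fact (1 ≤ P)]

theorem eLpNorm_amul_sub_le (hf : ContDiff ℝ 1 f) (hP : P ≠ ⊤) {s : ℝ} (hs : 0 ≤ s) :
    eLpNorm (f ∘ amul s - f) P volume ≤ ENNReal.ofReal s * eLpNorm (hGrad P f) P volume :=
  (eLpNorm_flow_sub_le continuous_uncurry_amul (by simp [amul]) measurePreserving_amul
    (continuous_da hf) (hasDerivAt_amul (hf.differentiable one_ne_zero)) Fact.out hP hs).trans <|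
    mul_le_mul_right (eLpNorm_mono fun h ↦ WithLp.norm_fst_le (x := hGrad P f h)) _

theorem eLpNorm_bmul_sub_le (hf : ContDiff ℝ 1 f) (hP : P ≠ ⊤) {s : ℝ} (hs : 0 ≤ s) :
    eLpNorm (f ∘ bmul s - f) P volume ≤ ENNReal.ofReal s * eLpNorm (hGrad P f) P volume :=
  (eLpNorm_flow_sub_le continuous_uncurry_bmul (by simp [bmul]) measurePreserving_bmul
    (continuous_db hf) (hasDerivAt_bmul (hf.differentiable one_ne_zero)) Fact.out hP hs).trans <|
    mul_le_mul_right (eLpNorm_mono fun h ↦ WithLp.norm_snd_le (x := hGrad P f h)) _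

theorem eLpNorm_vmul_mul_self_sub_le (hf : ContDiff ℝ 1 f) (hP : P ≠ ⊤) {s : ℝ} (hs : 0 ≤ s) :
    eLpNorm (f ∘ vmul (s * s) - f) P volume ≤
      4 * ENNReal.ofReal s * eLpNorm (hGrad P f) P volume := by
  have hA := measurePreserving_amul s
  have hB := measurePreserving_bmul s
  have hfm : AEStronglyMeasurable f volume := hf.continuous.aestronglyMeasurable
  have hfv : AEStronglyMeasurable (f ∘ vmul (s * s) - f) volume :=
    (hfm.comp_measurePreserving (measurePreserving_vmul _)).sub hfm
  have hcommutator : (f ∘ vmul (s * s) - f) ∘ (amul s ∘ bmul s) =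
      f ∘ bmul s ∘ amul s - f ∘ amul s ∘ bmul s := by
    funext h
    simp only [Function.comp_apply, Pi.sub_apply, vmul_amul_bmul]
  rw [← eLpNorm_comp_measurePreserving hfv (hA.comp hB), hcommutator]
  calc eLpNorm (f ∘ bmul s ∘ amul s - f ∘ amul s ∘ bmul s) P volume
      ≤ 2 * (eLpNorm (f ∘ amul s - f) P volume + eLpNorm (f ∘ bmul s - f) P volume) :=
        eLpNorm_comp_comp_sub_comp_comp_le hA hB hfm Fact.out
    _ ≤ 2 * (ENNReal.ofReal s * eLpNorm (hGrad P f) P volume +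
          ENNReal.ofReal s * eLpNorm (hGrad P f) P volume) := by
        gcongr
        exacts [eLpNorm_amul_sub_le hf hP hs, eLpNorm_bmul_sub_le hf hP hs]
    _ = 4 * ENNReal.ofReal s * eLpNorm (hGrad P f) P volume := by ring

end

section Sobolev

variable (X) (P : ENNReal) [Fact (1 ≤ P)]

/-- The horizontal Sobolev functions, restricted to those of class `C¹` so that the horizontal
gradient is the classical one. -/
def horizontalSobolev : Submodule ℝ (HR → X) where
  carrier := {f | ContDiff ℝ 1 f ∧ MemLp f P volume ∧ MemLp (hGrad P f) P volume}
  add_mem' := by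
    rintro f g ⟨hf, hfP, hf'⟩ ⟨hg, hgP, hg'⟩
    refine ⟨hf.add hg, hfP.add hgP, ?_⟩
    rw [hGrad_add P (hf.differentiable one_ne_zero) (hg.differentiable one_ne_zero)]
    exact hf'.add hg'
  zero_mem' := by
    refine ⟨contDiff_const, .zero, ?_⟩
    have : hGrad P (0 : HR → X) = 0 := by
      simpa using hGrad_smul (f := (0 : HR → X)) P 0 (differentiable_const 0)
    exact this ▸ .zero
  smul_mem' := by
    rintro c f ⟨hf, hfP, hf'⟩
    refine ⟨hf.const_smul c, hfP.const_smul c, ?_⟩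
    rw [hGrad_smul P c (hf.differentiable one_ne_zero)]
    exact hf'.const_smul c

namespace horizontalSobolev

/-- The inclusion of the horizontal Sobolev functions in `L_P`. -/
noncomputable def valLp : horizontalSobolev X P →ₗ[ℝ] Lp X P (volume : Measure HR) where
  toFun f := f.2.2.1.toLp
  map_add' _ _ := rfl
  map_smul' _ _ := rfl

/-- The horizontal gradient as an operator into `L_P`. -/
noncomputable def hGradLp :
    horizontalSobolev X P →ₗ[ℝ] Lp (WithLp P (X × X)) P (volume : Measure HR) where
  toFun f := f.2.2.2.toLp
  map_add' f g := by
    rw [← MemLp.toLp_add]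
    congr 1
    exact hGrad_add P (f.2.1.differentiable one_ne_zero) (g.2.1.differentiable one_ne_zero)
  map_smul' c f := by
    rw [RingHom.id_apply, ← MemLp.toLp_const_smul]
    congr 1
    exact hGrad_smul P c (f.2.1.differentiable one_ne_zero)

/-- Central translation `f ↦ f(· c^t)` as an operator on the horizontal Sobolev functions. -/
def vmulEnd (t : ℝ) : Module.End ℝ (horizontalSobolev X P) where
  toFun f := ⟨f ∘ vmul t, by
    refine ⟨?_, f.2.2.1.comp_measurePreserving (measurePreserving_vmul t), ?_⟩
    · exact f.2.1.comp (by unfold vmul; fun_prop)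
    · rw [hGrad_comp_vmul]
      exact f.2.2.2.comp_measurePreserving (measurePreserving_vmul t)⟩
  map_add' _ _ := rfl
  map_smul' _ _ := rfl

variable {X P}

theorem vmulEnd_pow (t : ℝ) (n : ℕ) : vmulEnd X P t ^ n = vmulEnd X P (n * t) := by
  refine LinearMap.ext fun f ↦ Subtype.ext ?_
  change ((vmulEnd X P t ^ n) f : HR → X) = f ∘ vmul (n * t)
  induction n with
  | zero => simp [Function.comp_def, vmul]
  | succ n ih =>
    rw [pow_succ', Module.End.mul_apply]
    change ((vmulEnd X P t ^ n) f : HR → X) ∘ vmul t = _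
    have hadd : t + n * t = (n + 1 : ℕ) * t := by
      push_cast
      ring
    simp only [ih, Function.comp_def, vmul_vmul, hadd]

theorem norm_valLp_sub_vmulEnd (t : ℝ) (f : horizontalSobolev X P) :
    ‖valLp X P (f - vmulEnd X P t f)‖ =
      (eLpNorm ((f : HR → X) ∘ vmul t - (f : HR → X)) P volume).toReal := by
  rw [eLpNorm_sub_comm]
  exact Lp.norm_toLp _ (f - vmulEnd X P t f).2.2.1

theorem norm_hGradLp (f : horizontalSobolev X P) :
    ‖hGradLp X P f‖ = (eLpNorm (hGrad P (f : HR → X)) P volume).toReal :=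
  Lp.norm_toLp _ f.2.2.2

theorem norm_valLp_sub_vmulEnd_eq_integral (hP : P ≠ ⊤) (t : ℝ) (f : horizontalSobolev X P) :
    ‖valLp X P (f - vmulEnd X P t f)‖ =
      (∫ h, ‖(f : HR → X) (vmul t h) - (f : HR → X) h‖ ^ P.toReal) ^ (1 / P.toReal) := by
  have hP₀ : P ≠ 0 := (zero_lt_one.trans_le Fact.out).ne'
  have hmeas : AEStronglyMeasurable ((f : HR → X) ∘ vmul t - (f : HR → X)) volume :=
    ((vmulEnd X P t f).2.2.1.sub f.2.2.1).1
  rw [norm_valLp_sub_vmulEnd, toReal_eLpNorm hmeas,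
    lpNorm_eq_integral_norm_rpow_toReal hP₀ hP hmeas, one_div]
  rfl

theorem norm_hGradLp_eq_integral (hP : P ≠ ⊤) (f : horizontalSobolev X P) :
    ‖hGradLp X P f‖ =
      (∫ h, (‖da (f : HR → X) h‖ ^ P.toReal + ‖db (f : HR → X) h‖ ^ P.toReal)) ^
        (1 / P.toReal) := by
  have hP₁ : P ≠ 0 := (zero_lt_one.trans_le Fact.out).ne'
  have hP₀ : 0 < P.toReal := ENNReal.toReal_pos hP₁ hP
  rw [norm_hGradLp, toReal_eLpNorm f.2.2.2.1,
    lpNorm_eq_integral_norm_rpow_toReal hP₁ hP f.2.2.2.1, one_div]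
  congr 1
  refine integral_congr_ae (.of_forall fun h ↦ ?_)
  dsimp only
  rw [WithLp.prod_norm_eq_add hP₀, one_div, Real.rpow_inv_rpow (by positivity) hP₀.ne']
  rfl

theorem hGradLp_vmulEnd (t : ℝ) (f : horizontalSobolev X P) :
    hGradLp X P (vmulEnd X P t f) =
      Lp.compMeasurePreserving (vmul t) (measurePreserving_vmul t) (hGradLp X P f) := by
  refine Eq.trans ?_ (Lp.toLp_compMeasurePreserving f.2.2.2 (measurePreserving_vmul t)).symm
  exact MemLp.toLp_congr (vmulEnd X P t f).2.2.2 _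
    (.of_forall (congrFun (hGrad_comp_vmul P (f : HR → X) t)))

theorem norm_valLp_sub_vmulEnd_le (hP : P ≠ ⊤) {t : ℝ} (ht : 0 ≤ t)
    (f : horizontalSobolev X P) :
    ‖valLp X P (f - vmulEnd X P t f)‖ ≤ 4 * √t * ‖hGradLp X P f‖ := by
  have hmain := eLpNorm_vmul_mul_self_sub_le f.2.1 hP (Real.sqrt_nonneg t)
  rw [Real.mul_self_sqrt ht] at hmain
  rw [norm_valLp_sub_vmulEnd, norm_hGradLp]
  refine (ENNReal.toReal_mono ?_ hmain).trans_eq ?_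
  · exact ENNReal.mul_ne_top (by finiteness) f.2.2.2.eLpNorm_ne_top
  · rw [ENNReal.toReal_mul, ENNReal.toReal_mul, ENNReal.toReal_ofReal (Real.sqrt_nonneg _)]
    rfl

theorem isVerticalSystem (hP : P ≠ ⊤) {t : ℝ} (ht : 0 < t) :
    IsVerticalSystem ((normSeminorm ℝ (Lp X P volume)).comp (valLp X P)) (vmulEnd X P t)
      (Lp.compMeasurePreservingₗᵢ ℝ (vmul t) (measurePreserving_vmul t)) (hGradLp X P)
      (fun k ↦ 4 * √(2 ^ k * t)) where
  map_eq f := Lp.norm_compMeasurePreserving (valLp X P f) (measurePreserving_vmul t)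
  intertwines := LinearMap.ext (hGradLp_vmulEnd t)
  scale_pos k := by positivity
  scale_succ k := by
    rw [pow_succ', mul_assoc, Real.sqrt_mul zero_le_two]
    ring
  poincare k f := by
    rw [vmulEnd_pow, Nat.cast_pow, Nat.cast_ofNat]
    exact norm_valLp_sub_vmulEnd_le hP (by positivity) f

theorem sum_norm_valLp_sub_vmulEnd_div_sqrt_le {c q : ℝ} (hX : TwoPointConvex X c P.toReal q)
    (hc : 0 < c) (hP : P ≠ ⊤) (hPq : P.toReal ≤ q) (f : horizontalSobolev X P) {t : ℝ}
    (ht : 0 < t) (n : ℕ) :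
    ∑ k ∈ Finset.range n, (‖valLp X P (f - vmulEnd X P (2 ^ k * t) f)‖ / √(2 ^ k * t)) ^ q ≤
      4 ^ q * dyadicPoincareConst q c * ‖hGradLp X P f‖ ^ q := by
  have hP₁ : 1 ≤ P.toReal := (ENNReal.ofReal_le_iff_le_toReal hP).1 (by simpa using Fact.out)
  have hsum := (isVerticalSystem hP ht).sum_sub_pow_div_scale_le
    ((hX.withLp_prod hc.le hP hPq).lp hc.le hP hPq) hc (by linarith) (hP₁.trans hPq) f n
  rw [mul_assoc]
  refine le_trans ?_ (mul_le_mul_of_nonneg_left hsum (by positivity))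
  rw [Finset.mul_sum]
  refine Finset.sum_le_sum fun k _ ↦ ?_
  rw [vmulEnd_pow, Nat.cast_pow, Nat.cast_ofNat, ← Real.mul_rpow zero_le_four
    (div_nonneg (apply_nonneg _ _) (by positivity)), mul_div_assoc',
    mul_div_mul_left _ _ four_ne_zero]
  exact le_rfl

theorem setLIntegral_norm_valLp_sub_vmulEnd_le {c q : ℝ} (hX : TwoPointConvex X c P.toReal q)
    (hc : 0 < c) (hP : P ≠ ⊤) (hPq : P.toReal ≤ q) (f : horizontalSobolev X P) :
    ∫⁻ t in Set.Ioi (0 : ℝ),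
        ENNReal.ofReal (‖valLp X P (f - vmulEnd X P t f)‖ ^ q / t ^ (1 + q / 2)) ≤
      ENNReal.ofReal (4 ^ q * dyadicPoincareConst q c * ‖hGradLp X P f‖ ^ q) := by
  refine le_trans (setLIntegral_mono_ae' measurableSet_Ioi (.of_forall fun t ht ↦ le_of_eq ?_))
    (setLIntegral_Ioi_div_le_of_sum_two_pow_le
      (G := fun t ↦ ENNReal.ofReal ((‖valLp X P (f - vmulEnd X P t f)‖ / √t) ^ q))
      fun t ht n ↦ ?_)
  · have ht₀ : 0 < t := ht
    rw [← ENNReal.ofReal_div_of_pos ht₀, Real.div_rpow (norm_nonneg _) (Real.sqrt_nonneg t),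
      Real.sqrt_eq_rpow, ← Real.rpow_mul ht₀.le, div_div, one_div_mul_eq_div, add_comm,
      Real.rpow_add_one ht₀.ne']
  · rw [← ENNReal.ofReal_sum_of_nonneg fun k _ ↦ by positivity]
    exact ENNReal.ofReal_le_ofReal
      (sum_norm_valLp_sub_vmulEnd_div_sqrt_le hX hc hP hPq f ht n)

theorem vertical_poincare {c q : ℝ} (hX : TwoPointConvex X c P.toReal q) (hc : 0 < c)
    (hP : P ≠ ⊤) (hPq : P.toReal ≤ q) (f : horizontalSobolev X P) :
    (∫⁻ t in Set.Ioi (0 : ℝ), ENNReal.ofReal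
      ((∫ h, ‖(f : HR → X) (vmul t h) - (f : HR → X) h‖ ^ P.toReal) ^ (q / P.toReal) /
        t ^ (1 + q / 2))) ^ (1 / q) ≤
      ENNReal.ofReal (4 * dyadicPoincareConst q c ^ (1 / q) *
        (∫ h, (‖da (f : HR → X) h‖ ^ P.toReal + ‖db (f : HR → X) h‖ ^ P.toReal)) ^
          (1 / P.toReal)) := by
  have hP₀ : 0 < P.toReal := ENNReal.toReal_pos (zero_lt_one.trans_le Fact.out).ne' hP
  have hq₀ : 0 < q := hP₀.trans_le hPq
  have hD := dyadicPoincareConst_pos q hc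
  have hnorm : ∀ t : ℝ, ‖valLp X P (f - vmulEnd X P t f)‖ ^ q =
      (∫ h, ‖(f : HR → X) (vmul t h) - (f : HR → X) h‖ ^ P.toReal) ^ (q / P.toReal) :=
    fun t ↦ by
      rw [norm_valLp_sub_vmulEnd_eq_integral hP,
        ← Real.rpow_mul (integral_nonneg fun h ↦ by positivity), one_div_mul_eq_div]
  simp only [← hnorm, ← norm_hGradLp_eq_integral hP]
  refine (ENNReal.rpow_le_rpow (setLIntegral_norm_valLp_sub_vmulEnd_le hX hc hP hPq f)
    (by positivity)).trans_eq ?_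
  rw [ENNReal.ofReal_rpow_of_nonneg (by positivity) (by positivity), one_div,
    Real.mul_rpow (by positivity) (by positivity), Real.mul_rpow (by positivity) hD.le,
    Real.rpow_rpow_inv (by positivity) hq₀.ne', Real.rpow_rpow_inv (by positivity) hq₀.ne']

end horizontalSobolev

end Sobolev

end HR

open HR in
theorem real_vertical_vs_horizontal_poincare_general {η p q : ℝ} (hη : 0 < η) (hq : 2 ≤ q)
    (hp : 1 < p) (hpq : p ≤ q) :
    ∃ C : ℝ, 0 < C ∧
      ∀ (X : Type*) [NormedAddCommGroup X] [NormedSpace ℝ X], HasPowerTypeConvexity X η q →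
        ∀ f : HR → X, ContDiff ℝ 1 f → MemLp f (ENNReal.ofReal p) volume →
          MemLp (da f) (ENNReal.ofReal p) volume → MemLp (db f) (ENNReal.ofReal p) volume →
          (∫⁻ t in Set.Ioi (0 : ℝ), ENNReal.ofReal
            ((∫ h, ‖f (vmul t h) - f h‖ ^ p) ^ (q / p) / t ^ (1 + q / 2))) ^ (1 / q) ≤
            ENNReal.ofReal (C * (∫ h, (‖da f h‖ ^ p + ‖db f h‖ ^ p)) ^ (1 / p)) := by
  have hc := convexityConst_pos hη hp q
  have hD := dyadicPoincareConst_pos q hc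
  refine ⟨4 * dyadicPoincareConst q (convexityConst η p q) ^ (1 / q), by positivity,
    fun X _ _ hX f hf hfP hda hdb ↦ ?_⟩
  have : Fact (1 ≤ ENNReal.ofReal p) := ⟨ENNReal.one_le_ofReal.2 hp.le⟩
  have hpP : (ENNReal.ofReal p).toReal = p := ENNReal.toReal_ofReal (by linarith)
  have hgrad : MemLp (hGrad (ENNReal.ofReal p) f) (ENNReal.ofReal p) volume :=
    MemLp.of_fst_of_snd_prodLp ⟨hda, hdb⟩
  have hconv := hX.twoPointConvex hη hp hpq hq
  simpa only [hpP] using horizontalSobolev.vertical_poincare (hpP.symm ▸ hconv) hc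
    ENNReal.ofReal_ne_top (hpP.le.trans hpq) ⟨f, hf, hfP, hgrad⟩

open HR in
/-- Theorem 2.1 (Real vertical versus horizontal Poincaré inequality). -/
theorem real_vertical_vs_horizontal_poincare (η : ℝ) (hη : η ∈ Set.Ioo (0 : ℝ) 1)
    (q p : ℝ) (hq : 2 ≤ q) (hp : 1 < p) (hpq : p ≤ q) :
    ∃ C : ℝ, 0 < C ∧
      ∀ (X : Type) [NormedAddCommGroup X] [NormedSpace ℝ X] [CompleteSpace X],
        (∀ ε ∈ Set.Ioo (0 : ℝ) 1, ∀ x y : X, ‖x‖ = 1 → ‖y‖ = 1 → ε ≤ ‖x - y‖ →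
          ‖x + y‖ ≤ 2 * (1 - (η * ε) ^ q)) →
        ∀ f : HR → X, ContDiff ℝ (⊤ : ℕ∞) f → HasCompactSupport f →
          (∫⁻ t in Set.Ioi (0 : ℝ),
              ENNReal.ofReal
                ((∫ h : HR, ‖f (vmul t h) - f h‖ ^ p) ^ (q / p) / t ^ (1 + q / 2))) ^ (1 / q) ≤
            ENNReal.ofReal
              (C * (∫ h : HR, (‖da f h‖ ^ p + ‖db f h‖ ^ p)) ^ (1 / p)) := by
  obtain ⟨C, hC, hmain⟩ := real_vertical_vs_horizontal_poincare_general hη.1 hq hp hpq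
  refine ⟨C, hC, fun X _ _ _ hX f hf hfc ↦ ?_⟩
  have hf₁ : ContDiff ℝ 1 f := hf.of_le (by simp)
  exact hmain X hX f hf₁ (hf.continuous.memLp_of_hasCompactSupport hfc)
    ((continuous_da hf₁).memLp_of_hasCompactSupport (hfc.fderiv_apply ℝ _))
    ((continuous_db hf₁).memLp_of_hasCompactSupport
      ((hfc.fderiv_apply ℝ _).add ((hfc.fderiv_apply ℝ _).smul_left (f := fun h : HR ↦ h.1))))
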